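/- Let v : ℝ × ℝ → ℂ satisfy the Fourier-side fractional KdV-BBM equation (1 + ν|k|^α) ∂_t v(t,k) + iκk v(t,k) − iμ|k|^α k v(t,k) + (iλk/(4π)) ∫_ℝ v(t,k−l) v(t,l) dl = 0 for all (t,k), where t ↦ v(t,k) is differentiable for each k. Assume the reality condition v(t,−k) = conj(v(t,k)) for all (t,k); that for each t the functions k ↦ (1+ν|k|^α)|v(t,k)|² and k ↦ (1+ν|k|^α)|v(t,k)||∂_t v(t,k)| are integrable, the latter dominated locally uniformly in t by an integrable function of k (so that differentiation under the integral sign is justified); and that the double integral ∬ |k| |v(t,k−l)| |v(t,l)| |v(t,k)| dl dk is finite for each t. Then the energy E(t) = ∫_ℝ (1 + ν|k|^α) |v(t,k)|² dk is constant in t. (By Plancherel this is the conservation of I₂ = ∫(u² + ν|D^{α/2}u|²) dx.) -/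

import Mathlib

open MeasureTheory

/-! Multiplying the equation by `conj v` and taking real parts gives the energy balance
`∂ₜ((1 + ν|k|^α)|v|²) = -(λ/2π) Im T(k)`, where
`T(k) = k ∫ v(k) v(b) conj(v(k + b)) db`. Formally, the symmetry `b ↦ -k - b` replaces the weight
`k` by `(2/3)(k - b)`, which is antisymmetric in the two modes, so `∫ T = 0` by Fubini.

Fubini's theorem is not available, because `v` need not be measurable in `k`: only the products
`v(x) conj(v(x - k))` are, as for a non-measurable character. For truncated `v`, with
`A(k) = ∫ v(x) conj(v(x - k)) dx`, the function `|A|²` is an integral of autocorrelations of these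
products, so `|A|` is continuous and a small translate of `v` is `L²`-close to `v` up to a
unimodular constant. Hence on a fine lattice with two base points, exchanging the lattice parts of
two frequencies almost preserves `v(a) v(b)`; lattice sums of `T` therefore cancel by antisymmetry,
with an error that vanishes as the mesh is refined.
-/

open Filter Topology ComplexConjugate
open scoped ENNReal NNReal

section LagProduct

variable {𝕜 : Type*} [RCLike 𝕜]

/-- The product of `f` with the conjugate of its translate by `k`; its integral is the
autocorrelation of `f` at lag `k`. -/
def lagProduct (f : ℝ → 𝕜) (k x : ℝ) : 𝕜 := f x * conj (f (x - k))

/-- The autocorrelation `k ↦ ∫ f(x) conj f(x - k) dx`. -/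
noncomputable def autocorrelation (f : ℝ → 𝕜) (k : ℝ) : 𝕜 := ∫ x, lagProduct f k x

/-- All lag products of `f` are measurable, although `f` itself need not be: `f` may for instance
be a non-measurable character of `ℝ`. -/
def CorrelationMeasurable (f : ℝ → 𝕜) : Prop := ∀ k, AEStronglyMeasurable (lagProduct f k)

variable {f : ℝ → 𝕜}

theorem lagProduct_zero (f : ℝ → 𝕜) (x : ℝ) : lagProduct f 0 x = ((‖f x‖ ^ 2 : ℝ) : 𝕜) := by
  rw [lagProduct, sub_zero, RCLike.mul_conj, RCLike.ofReal_pow]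

theorem norm_lagProduct (f : ℝ → 𝕜) (k x : ℝ) : ‖lagProduct f k x‖ = ‖f x‖ * ‖f (x - k)‖ := by
  rw [lagProduct, norm_mul, RCLike.norm_conj]

theorem lagProduct_lagProduct_comm (f : ℝ → 𝕜) (q k : ℝ) :
    lagProduct (lagProduct f q) k = lagProduct (lagProduct f k) q := by
  funext x
  simp only [lagProduct, map_mul, RCLike.conj_conj, sub_right_comm x q k]
  ring

theorem CorrelationMeasurable.aestronglyMeasurable_norm (hf : CorrelationMeasurable f) :
    AEStronglyMeasurable fun x => ‖f x‖ := by
  have hsqrt := (Real.continuous_sqrt.comp_aestronglyMeasurable (hf 0).norm)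
  refine hsqrt.congr (.of_forall fun x => ?_)
  simp only [norm_lagProduct, sub_zero, Real.sqrt_mul_self (norm_nonneg _)]

theorem integrable_prod_lagProduct (hf : Integrable f) :
    Integrable fun p : ℝ × ℝ => lagProduct f p.1 p.2 := by
  have hg : Integrable fun x => conj (f (-x)) :=
    (RCLike.conjLIE (K := 𝕜)).toContinuousLinearEquiv.toContinuousLinearMap.integrable_comp
      hf.comp_neg
  simpa [lagProduct, Measure.volume_eq_prod] using
    hf.convolution_integrand (ContinuousLinearMap.mul ℝ 𝕜) hg

theorem integrable_autocorrelation (hf : Integrable f) : Integrable (autocorrelation f) :=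
  (integrable_prod_lagProduct hf).integral_prod_left

theorem integral_autocorrelation (hf : Integrable f) :
    ∫ k, autocorrelation f k = ((‖∫ x, f x‖ ^ 2 : ℝ) : 𝕜) := by
  simp only [autocorrelation]
  rw [integral_integral_swap (integrable_prod_lagProduct hf)]
  simp only [lagProduct]
  simp_rw [integral_const_mul, integral_sub_left_eq_self (fun y => conj (f y)), integral_conj,
    integral_mul_const, RCLike.mul_conj, RCLike.ofReal_pow]

theorem continuous_autocorrelation (hf : MemLp f 2) : Continuous (autocorrelation f) := by
  have hshift : Continuous fun k : ℝ =>
      Lp.compMeasurePreserving (fun x : ℝ => x - k) (measurePreserving_sub_right volume k)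
        (hf.toLp f) := by
    have hcurry : Continuous fun k : ℝ => (⟨fun x => x - k, by fun_prop⟩ : C(ℝ, ℝ)) :=
      ContinuousMap.continuous_of_continuous_uncurry _ (continuous_snd.sub continuous_fst)
    exact continuous_const.compMeasurePreservingLp hcurry
      (fun k => measurePreserving_sub_right volume k) ENNReal.ofNat_ne_top
  have hinner := hshift.inner (𝕜 := 𝕜) (continuous_const (y := hf.toLp f))
  refine hinner.congr fun k => ?_
  rw [L2.inner_def]
  refine integral_congr_ae ?_
  have hshift_ae : Lp.compMeasurePreserving (fun x : ℝ => x - k)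
      (measurePreserving_sub_right volume k) (hf.toLp f) =ᵐ[volume] fun x => f (x - k) :=
    (Lp.coeFn_compMeasurePreserving _ _).trans
      ((measurePreserving_sub_right volume k).quasiMeasurePreserving.ae_eq_comp hf.coeFn_toLp)
  filter_upwards [hshift_ae, hf.coeFn_toLp] with x hxk hx
  rw [hxk, hx, RCLike.inner_apply, lagProduct]

variable {B : ℝ≥0}

theorem CorrelationMeasurable.integrable_lagProduct (hf : CorrelationMeasurable f)
    (hB : ∀ x, ‖f x‖ ≤ B) (hint : Integrable fun x => ‖f x‖) (k : ℝ) :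
    Integrable (lagProduct f k) := by
  refine (hint.mul_const (B : ℝ)).mono' (hf k) (.of_forall fun x => ?_)
  rw [norm_lagProduct]
  exact mul_le_mul_of_nonneg_left (hB _) (norm_nonneg _)

-- `|A(k)|²` is the integral over `q` of the autocorrelation at lag `k` of `lagProduct f q`, which,
-- unlike `f`, is measurable.
theorem continuous_norm_autocorrelation (hf : CorrelationMeasurable f) (hB : ∀ x, ‖f x‖ ≤ B)
    (hint : Integrable fun x => ‖f x‖) : Continuous fun k => ‖autocorrelation f k‖ := by
  have hlag := hf.integrable_lagProduct hB hint
  have hlag_norm (k x : ℝ) : ‖lagProduct f k x‖ = lagProduct (fun y => ‖f y‖) k x :=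
    norm_lagProduct f k x
  have hlag_bound (k x : ℝ) : ‖lagProduct f k x‖ ≤ B ^ 2 := by
    rw [norm_lagProduct, sq]
    exact mul_le_mul (hB _) (hB _) (norm_nonneg _) B.2
  have hsq (k : ℝ) : ‖autocorrelation f k‖ ^ 2 =
      RCLike.re (∫ q, autocorrelation (lagProduct f q) k) := by
    simp only [autocorrelation, lagProduct_lagProduct_comm f _ k]
    exact .symm <| (congrArg _ (integral_autocorrelation (hlag k))).trans (RCLike.ofReal_re _)
  have hcont : Continuous fun k => ∫ q, autocorrelation (lagProduct f q) k := by
    refine continuous_of_dominated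
      (bound := fun q => B ^ 2 * autocorrelation (fun x => ‖f x‖) q) (fun k => ?_)
      (fun k => .of_forall fun q => ?_) ((integrable_autocorrelation hint).const_mul _)
      (.of_forall fun q => continuous_autocorrelation ?_)
    · simp only [autocorrelation, lagProduct_lagProduct_comm f _ k]
      exact (integrable_autocorrelation (hlag k)).aestronglyMeasurable
    · simp only [autocorrelation, ← hlag_norm, ← integral_const_mul]
      refine norm_integral_le_of_norm_le ((hlag q).norm.const_mul _) (.of_forall fun x => ?_)
      rw [norm_lagProduct, mul_comm]
      exact mul_le_mul_of_nonneg_right (hlag_bound _ _) (norm_nonneg _)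
    · refine (memLp_two_iff_integrable_sq_norm (hlag q).1).2 <|
        ((hlag q).norm.const_mul (B ^ 2 : ℝ)).mono' ((hlag q).1.norm.pow 2) (.of_forall fun x => ?_)
      rw [norm_pow, norm_norm, sq]
      exact mul_le_mul_of_nonneg_right (hlag_bound q x) (norm_nonneg _)
  refine (Real.continuous_sqrt.comp (RCLike.continuous_re.comp hcont)).congr fun k => ?_
  simp only [Function.comp_apply, ← hsq, Real.sqrt_sq (norm_nonneg _)]

theorem exists_phase_integral_norm_sub_sq (hf : ∀ k, Integrable (lagProduct f k)) (k : ℝ) :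
    ∃ z : 𝕜, ‖z‖ = 1 ∧ Integrable (fun x => ‖f x - z * f (x - k)‖ ^ 2) ∧
      ∫ x, ‖f x - z * f (x - k)‖ ^ 2 = 2 * (‖autocorrelation f 0‖ - ‖autocorrelation f k‖) := by
  obtain ⟨z, hz, hzA⟩ := RCLike.exists_norm_eq_mul_self (autocorrelation f k)
  have hsq_int : Integrable fun x => ‖f x‖ ^ 2 := by
    simpa only [lagProduct_zero, RCLike.ofReal_re] using (hf 0).re
  have hsq : ∫ x, ‖f x‖ ^ 2 = ‖autocorrelation f 0‖ := by
    simp only [autocorrelation, lagProduct_zero, integral_ofReal, RCLike.norm_ofReal]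
    exact (abs_of_nonneg (integral_nonneg fun x => sq_nonneg _)).symm
  have hexpand (x : ℝ) : ‖f x - conj z * f (x - k)‖ ^ 2 =
      ‖f x‖ ^ 2 + ‖f (x - k)‖ ^ 2 - 2 * RCLike.re (z * lagProduct f k x) := by
    rw [norm_sub_rev, @norm_sub_sq 𝕜, RCLike.inner_apply, norm_mul, RCLike.norm_conj, hz, one_mul,
      (starRingEnd 𝕜).map_mul, RCLike.conj_conj, mul_left_comm, ← lagProduct]
    ring
  have hsum_int : Integrable fun x => ‖f x‖ ^ 2 + ‖f (x - k)‖ ^ 2 :=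
    hsq_int.add (hsq_int.comp_sub_right k)
  have hcross_int := ((hf k).const_mul z).re.const_mul 2
  refine ⟨conj z, (RCLike.norm_conj z).trans hz, ?_⟩
  simp only [hexpand]
  refine ⟨hsum_int.sub hcross_int, ?_⟩
  rw [integral_sub hsum_int hcross_int, integral_add hsq_int (hsq_int.comp_sub_right k),
    integral_sub_right_eq_self (fun x => ‖f x‖ ^ 2), integral_const_mul,
    integral_re ((hf k).const_mul z), integral_const_mul, ← autocorrelation, ← hzA,
    RCLike.ofReal_re, hsq]
  ring

theorem exists_phase_lintegral_enorm_sub_le (hf : ∀ k, Integrable (lagProduct f k)) (k : ℝ)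
    (s : Set ℝ) :
    ∃ z : 𝕜, ‖z‖ = 1 ∧ AEMeasurable (fun x => ‖f x - z * f (x - k)‖ₑ) ∧
      ∫⁻ x in s, ‖f x - z * f (x - k)‖ₑ ≤
        ENNReal.ofReal (2 * (‖autocorrelation f 0‖ - ‖autocorrelation f k‖)) ^ (1 / 2 : ℝ) *
          volume s ^ (1 / 2 : ℝ) := by
  obtain ⟨z, hz, hint, hval⟩ := exists_phase_integral_norm_sub_sq hf k
  have hmeas : AEMeasurable fun x => ‖f x - z * f (x - k)‖ₑ := by
    refine (Real.continuous_sqrt.comp_aestronglyMeasurable hint.1).enorm.congr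
      (.of_forall fun x => ?_)
    simp only [Real.sqrt_sq (norm_nonneg _), enorm_norm]
  have hsq : ∫⁻ x, ‖f x - z * f (x - k)‖ₑ ^ (2 : ℝ) =
      ENNReal.ofReal (2 * (‖autocorrelation f 0‖ - ‖autocorrelation f k‖)) := by
    rw [← hval, ofReal_integral_eq_lintegral_ofReal hint (.of_forall fun x => sq_nonneg _)]
    simp only [ENNReal.ofReal_pow (norm_nonneg _), ofReal_norm, ENNReal.rpow_two]
  refine ⟨z, hz, hmeas, ?_⟩
  calc ∫⁻ x in s, ‖f x - z * f (x - k)‖ₑ = ∫⁻ x in s, ‖f x - z * f (x - k)‖ₑ * 1 := by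
        simp only [mul_one]
    _ ≤ (∫⁻ x in s, ‖f x - z * f (x - k)‖ₑ ^ (2 : ℝ)) ^ (1 / 2 : ℝ) *
          (∫⁻ _ in s, 1 ^ (2 : ℝ)) ^ (1 / 2 : ℝ) :=
        ENNReal.lintegral_mul_le_Lp_mul_Lq _ .two_two hmeas.restrict aemeasurable_const
    _ ≤ _ := by
        rw [← hsq, ENNReal.one_rpow, setLIntegral_one]
        gcongr
        exact Measure.restrict_le_self

theorem eventually_exists_phase_lintegral_enorm_sub_le (hf : CorrelationMeasurable f)
    (hB : ∀ x, ‖f x‖ ≤ B) (hint : Integrable fun x => ‖f x‖) {s : Set ℝ} (hs : volume s ≠ ∞)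
    {ε : ℝ≥0∞} (hε : 0 < ε) :
    ∀ᶠ k in 𝓝 0, ∃ z : 𝕜, ‖z‖ = 1 ∧ AEMeasurable (fun x => ‖f x - z * f (x - k)‖ₑ) ∧
      ∫⁻ x in s, ‖f x - z * f (x - k)‖ₑ ≤ ε := by
  have hlim : Tendsto (fun k =>
      ENNReal.ofReal (2 * (‖autocorrelation f 0‖ - ‖autocorrelation f k‖)) ^ (1 / 2 : ℝ) *
        volume s ^ (1 / 2 : ℝ)) (𝓝 0) (𝓝 0) := by
    have hcont := continuous_norm_autocorrelation hf hB hint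
    have hgap : Tendsto (fun k => 2 * (‖autocorrelation f 0‖ - ‖autocorrelation f k‖))
        (𝓝 0) (𝓝 0) :=
      Continuous.tendsto' (by fun_prop) 0 0 (by rw [sub_self, mul_zero])
    have hroot := ((ENNReal.continuous_rpow_const (y := 1 / 2)).tendsto _).comp
      (ENNReal.tendsto_ofReal hgap)
    rw [ENNReal.ofReal_zero, ENNReal.zero_rpow_of_pos one_half_pos] at hroot
    rw [← zero_mul (volume s ^ (1 / 2 : ℝ))]
    exact ENNReal.Tendsto.mul_const hroot (.inr (ENNReal.rpow_ne_top_of_nonneg one_half_pos.le hs))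
  filter_upwards [hlim.eventually_le_const hε] with k hk
  obtain ⟨z, hz, hmeas, hle⟩ :=
    exists_phase_lintegral_enorm_sub_le (hf.integrable_lagProduct hB hint) k s
  exact ⟨z, hz, hmeas, hle.trans hk⟩

end LagProduct

section Lattice

theorem volume_restrict_Ioc_eq_sum_map (a : ℝ) {h : ℝ} (hh : 0 ≤ h) (n : ℕ) :
    volume.restrict (Set.Ioc a (a + n * h)) =
      ∑ i ∈ Finset.range n, (volume.restrict (Set.Ioc a (a + h))).map (· + i * h) := by
  induction n with
  | zero => simp
  | succ n ih =>
    have hcell : (volume.restrict (Set.Ioc a (a + h))).map (· + n * h) =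
        volume.restrict (Set.Ioc (a + n * h) (a + (n + 1 : ℕ) * h)) := by
      have hpre : (· + n * h) ⁻¹' Set.Ioc (a + n * h) (a + (n + 1 : ℕ) * h) =
          Set.Ioc a (a + h) := by
        rw [Set.preimage_add_const_Ioc]
        push_cast
        ring_nf
      rw [← hpre]
      exact ((measurePreserving_add_right volume (n * h)).restrict_preimage
        measurableSet_Ioc).map_eq
    have hn : 0 ≤ n * h := by positivity
    rw [Finset.sum_range_succ, ← ih, hcell, ← Measure.restrict_union
      (Set.Ioc_disjoint_Ioc_of_le le_rfl) measurableSet_Ioc, Set.Ioc_union_Ioc_eq_Ioc]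
    · linarith
    · push_cast
      linarith

variable {a h : ℝ} {n : ℕ}

theorem setLIntegral_Ioc_eq_setLIntegral_sum {F : ℝ → ℝ≥0∞} (hF : AEMeasurable F) (hh : 0 ≤ h) :
    ∫⁻ x in Set.Ioc a (a + n * h), F x =
      ∫⁻ x in Set.Ioc a (a + h), ∑ i ∈ Finset.range n, F (x + i * h) := by
  have hshift (i : ℕ) : AEMeasurable fun x => F (x + i * h) :=
    hF.comp_quasiMeasurePreserving (measurePreserving_add_right volume _).quasiMeasurePreserving
  rw [lintegral_finsetSum' _ fun i _ => (hshift i).restrict, volume_restrict_Ioc_eq_sum_map a hh,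
    lintegral_finsetSum_measure]
  exact Finset.sum_congr rfl fun i _ => (measurableEmbedding_addRight (i * h)).lintegral_map _

theorem setIntegral_Ioc_eq_setIntegral_sum {E : Type*} [NormedAddCommGroup E] [NormedSpace ℝ E]
    {F : ℝ → E} (hF : IntegrableOn F (Set.Ioc a (a + n * h))) (hh : 0 ≤ h) :
    ∫ x in Set.Ioc a (a + n * h), F x =
      ∫ x in Set.Ioc a (a + h), ∑ i ∈ Finset.range n, F (x + i * h) := by
  rw [IntegrableOn, volume_restrict_Ioc_eq_sum_map a hh, integrable_finsetSum_measure] at hF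
  rw [volume_restrict_Ioc_eq_sum_map a hh, integral_finsetSum_measure hF, integral_finsetSum]
  · exact Finset.sum_congr rfl fun i _ =>
      (measurableEmbedding_addRight (i * h)).integral_map _
  · exact fun i hi => (measurableEmbedding_addRight (i * h)).integrable_map_iff.1 (hF i hi)

theorem lintegral_lintegral_le_of_diagonal {S : ℝ → ℝ → ℝ≥0∞}
    (hS : AEMeasurable (Function.uncurry S)) {η : ℝ≥0∞}
    (hη : ∀ k, |k| ≤ h → ∫⁻ x in Set.Ioc a (a + h), S x (x - k) ≤ η) :
    ∫⁻ x in Set.Ioc a (a + h), ∫⁻ y in Set.Ioc a (a + h), S x y ≤ ENNReal.ofReal (2 * h) * η := by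
  have hmem {x k : ℝ} (hx : x ∈ Set.Ioc a (a + h)) (hk : x - k ∈ Set.Ioc a (a + h)) :
      k ∈ Set.Icc (-h) h := by
    constructor <;> linarith [hx.1, hx.2, hk.1, hk.2]
  have hshear : MeasurePreserving (fun p : ℝ × ℝ => (p.1, p.1 - p.2)) :=
    (MeasurePreserving.id volume).skew_product (g := fun x k => x - k) measurable_sub
      (.of_forall fun x => (Measure.measurePreserving_sub_left volume x).map_eq)
  calc ∫⁻ x in Set.Ioc a (a + h), ∫⁻ y in Set.Ioc a (a + h), S x y
      = ∫⁻ x in Set.Ioc a (a + h), ∫⁻ k, (Set.Ioc a (a + h)).indicator (S x) (x - k) := by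
        simp only [← lintegral_indicator measurableSet_Ioc]
        exact lintegral_congr fun x => congrArg _ <| funext fun _ =>
          (lintegral_sub_left_eq_self _ x).symm
    _ ≤ ∫⁻ x in Set.Ioc a (a + h), ∫⁻ k in Set.Icc (-h) h, S x (x - k) := by
        refine setLIntegral_mono' measurableSet_Ioc fun x hx => ?_
        rw [← lintegral_indicator measurableSet_Icc]
        refine lintegral_mono fun k => ?_
        by_cases hk : x - k ∈ Set.Ioc a (a + h)
        · rw [Set.indicator_of_mem hk, Set.indicator_of_mem (hmem hx hk)]
        · simp only [Set.indicator_of_notMem hk, zero_le]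
    _ = ∫⁻ k in Set.Icc (-h) h, ∫⁻ x in Set.Ioc a (a + h), S x (x - k) :=
        lintegral_lintegral_swap <| by
          rw [Measure.prod_restrict]
          exact (hS.comp_quasiMeasurePreserving hshear.quasiMeasurePreserving).restrict
    _ ≤ ∫⁻ _ in Set.Icc (-h) h, η := setLIntegral_mono' measurableSet_Icc fun k hk =>
        hη k (abs_le.2 hk)
    _ = ENNReal.ofReal (2 * h) * η := by
        rw [setLIntegral_const, Real.volume_Icc, sub_neg_eq_add, ← two_mul, mul_comm]

end Lattice

section LatticeDefect

variable {𝕜 : Type*} [RCLike 𝕜]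

/-- The failure of `f(x + s) f(y + t)` to be symmetric under the exchange of the shifts `s, t`. -/
def exchangeDefect (f : ℝ → 𝕜) (s t x y : ℝ) : 𝕜 := f (x + s) * f (y + t) - f (x + t) * f (y + s)

/-- The total exchange defect over all pairs of points of the lattice `{0, h, …, (n - 1)h}`. -/
noncomputable def latticeDefect (f : ℝ → 𝕜) (h : ℝ) (n : ℕ) (x y : ℝ) : ℝ≥0∞ :=
  ∑ i ∈ Finset.range n, ∑ j ∈ Finset.range n, ‖exchangeDefect f (i * h) (j * h) x y‖ₑ

variable {f : ℝ → 𝕜} {B : ℝ≥0}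

-- In `|exchangeDefect|²` the values of `f` pair up into lag products in `x` times lag products
-- in `y`.
theorem CorrelationMeasurable.aestronglyMeasurable_norm_exchangeDefect
    (hf : CorrelationMeasurable f) (s t : ℝ) :
    AEStronglyMeasurable fun p : ℝ × ℝ => ‖exchangeDefect f s t p.1 p.2‖ := by
  have hnorm (s : ℝ) : AEStronglyMeasurable fun x => ‖f (x + s)‖ :=
    hf.aestronglyMeasurable_norm.comp_measurePreserving (measurePreserving_add_right volume s)
  have hlag (s t : ℝ) : AEStronglyMeasurable fun x => f (x + s) * conj (f (x + t)) := by
    refine ((hf (s - t)).comp_measurePreserving (measurePreserving_add_right volume s)).congr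
      (.of_forall fun x => ?_)
    simp only [Function.comp_apply, lagProduct, add_sub_assoc, sub_sub_cancel]
  have hexpand (p : ℝ × ℝ) : ‖exchangeDefect f s t p.1 p.2‖ ^ 2 =
      (‖f (p.1 + s)‖ * ‖f (p.2 + t)‖) ^ 2 - 2 * RCLike.re ((f (p.1 + s) * conj (f (p.1 + t))) *
        (f (p.2 + t) * conj (f (p.2 + s)))) + (‖f (p.1 + t)‖ * ‖f (p.2 + s)‖) ^ 2 := by
    rw [exchangeDefect, norm_sub_rev, @norm_sub_sq 𝕜, RCLike.inner_apply, (starRingEnd 𝕜).map_mul,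
      norm_mul, norm_mul, mul_mul_mul_comm]
    ring
  have hsq : AEStronglyMeasurable fun p : ℝ × ℝ => ‖exchangeDefect f s t p.1 p.2‖ ^ 2 := by
    simp only [hexpand]
    have hcross := RCLike.continuous_re.comp_aestronglyMeasurable
      ((hlag s t).comp_fst (ν := volume) |>.mul (hlag t s).comp_snd)
    exact ((((hnorm s).comp_fst.mul (hnorm t).comp_snd).pow 2).sub (hcross.const_mul 2)).add
      (((hnorm t).comp_fst.mul (hnorm s).comp_snd).pow 2)
  refine (Real.continuous_sqrt.comp_aestronglyMeasurable hsq).congr (.of_forall fun p => ?_)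
  exact Real.sqrt_sq (norm_nonneg _)

theorem CorrelationMeasurable.aemeasurable_latticeDefect (hf : CorrelationMeasurable f) (h : ℝ)
    (n : ℕ) : AEMeasurable (Function.uncurry (latticeDefect f h n)) := by
  have hterm (i j : ℕ) : AEMeasurable fun p : ℝ × ℝ =>
      ‖exchangeDefect f (i * h) (j * h) p.1 p.2‖ₑ := by
    simpa only [enorm_norm] using (hf.aestronglyMeasurable_norm_exchangeDefect _ _).enorm
  simp only [Function.uncurry_def, latticeDefect]
  exact Finset.aemeasurable_fun_sum _ fun i _ => Finset.aemeasurable_fun_sum _ fun j _ => hterm i j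

theorem enorm_exchangeDefect_le (hB : ∀ x, ‖f x‖ ≤ B) (z : 𝕜) (s t x y : ℝ) :
    ‖exchangeDefect f s t x y‖ₑ ≤
      B * (‖f (x + s) - z * f (y + s)‖ₑ + ‖f (x + t) - z * f (y + t)‖ₑ) := by
  have hsplit : exchangeDefect f s t x y =
      f (y + t) * (f (x + s) - z * f (y + s)) - f (y + s) * (f (x + t) - z * f (y + t)) := by
    rw [exchangeDefect]
    ring
  rw [hsplit, mul_add]
  refine enorm_sub_le.trans ?_
  rw [enorm_mul, enorm_mul]
  gcongr <;> exact enorm_le_coe.2 (hB _)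

theorem latticeDefect_le (hB : ∀ x, ‖f x‖ ≤ B) (z : 𝕜) (h : ℝ) (n : ℕ) (x y : ℝ) :
    latticeDefect f h n x y ≤
      2 * n * B * ∑ i ∈ Finset.range n, ‖f (x + i * h) - z * f (y + i * h)‖ₑ := by
  set d : ℕ → ℝ≥0∞ := fun i => ‖f (x + i * h) - z * f (y + i * h)‖ₑ
  calc latticeDefect f h n x y
      ≤ ∑ i ∈ Finset.range n, ∑ j ∈ Finset.range n, B * (d i + d j) :=
        Finset.sum_le_sum fun i _ => Finset.sum_le_sum fun j _ =>
          enorm_exchangeDefect_le hB z _ _ _ _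
    _ = 2 * n * B * ∑ i ∈ Finset.range n, d i := by
        simp only [← Finset.mul_sum, Finset.sum_add_distrib, Finset.sum_const, Finset.card_range,
          nsmul_eq_mul]
        ring

theorem setLIntegral_latticeDefect_sub_le (hB : ∀ x, ‖f x‖ ≤ B) {z : 𝕜} {a h k : ℝ} {n : ℕ}
    (hh : 0 ≤ h) (hmeas : AEMeasurable fun x => ‖f x - z * f (x - k)‖ₑ) :
    ∫⁻ x in Set.Ioc a (a + h), latticeDefect f h n x (x - k) ≤
      2 * n * B * ∫⁻ x in Set.Ioc a (a + n * h), ‖f x - z * f (x - k)‖ₑ := by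
  rw [setLIntegral_Ioc_eq_setLIntegral_sum hmeas hh, ← lintegral_const_mul']
  · refine lintegral_mono fun x => (latticeDefect_le hB z h n x (x - k)).trans_eq ?_
    simp only [sub_add_eq_add_sub]
  · exact ENNReal.mul_ne_top (ENNReal.mul_ne_top ENNReal.ofNat_ne_top (ENNReal.natCast_ne_top n))
      ENNReal.coe_ne_top

theorem tendsto_lintegral_latticeDefect (hf : CorrelationMeasurable f) (hB : ∀ x, ‖f x‖ ≤ B)
    (hint : Integrable fun x => ‖f x‖) (a : ℝ) {ℓ : ℝ} (hℓ : 0 ≤ ℓ) :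
    Tendsto (fun n : ℕ => ∫⁻ x in Set.Ioc a (a + ℓ / n), ∫⁻ y in Set.Ioc a (a + ℓ / n),
      latticeDefect f (ℓ / n) n x y) atTop (𝓝 0) := by
  refine ENNReal.tendsto_nhds_zero.2 fun ε hε => ?_
  set M : ℝ≥0∞ := ENNReal.ofReal (4 * ℓ) * B with hM
  have hσ : 0 < ε / M :=
    ENNReal.div_pos hε.ne' (ENNReal.mul_ne_top ENNReal.ofReal_ne_top ENNReal.coe_ne_top)
  obtain ⟨δ, hδ, hphase⟩ := Metric.eventually_nhds_iff.1 <|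
    eventually_exists_phase_lintegral_enorm_sub_le hf hB hint
      (s := Set.Ioc a (a + ℓ)) measure_Ioc_lt_top.ne hσ
  filter_upwards [(tendsto_const_div_atTop_nhds_zero_nat ℓ).eventually_lt_const hδ,
    eventually_gt_atTop 0] with n hnδ hn
  have hnℓ : n * (ℓ / n) = ℓ := mul_div_cancel₀ ℓ (by positivity)
  have hdiag (k : ℝ) (hk : |k| ≤ ℓ / n) :
      ∫⁻ x in Set.Ioc a (a + ℓ / n), latticeDefect f (ℓ / n) n x (x - k) ≤
        2 * n * B * (ε / M) := by
    obtain ⟨z, -, hmeas, hle⟩ := hphase (by simpa using hk.trans_lt hnδ)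
    refine (setLIntegral_latticeDefect_sub_le hB (by positivity) hmeas).trans ?_
    rw [hnℓ]
    gcongr
  calc _ ≤ ENNReal.ofReal (2 * (ℓ / n)) * (2 * n * B * (ε / M)) :=
        lintegral_lintegral_le_of_diagonal (hf.aemeasurable_latticeDefect _ n) hdiag
    _ = M * (ε / M) := by
        rw [hM]
        have hmesh : ENNReal.ofReal (4 * ℓ) = ENNReal.ofReal (2 * (ℓ / n)) * (2 * n) := by
          rw [← ENNReal.ofReal_natCast, ← ENNReal.ofReal_ofNat 2, ← ENNReal.ofReal_mul zero_le_two,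
            ← ENNReal.ofReal_mul (by positivity)]
          congr 1
          linear_combination (-4) * hnℓ
        rw [hmesh]
        ring
    _ ≤ ε := ENNReal.mul_div_le

end LatticeDefect

section Triad

/-- The contribution of the modes `a`, `b` and `-(a + b)` to the cubic interaction, with the
third one written through the reality condition `w(-k) = conj w(k)`. -/
def triad (w : ℝ → ℂ) (a b : ℝ) : ℂ := w a * w b * conj (w (a + b))

/-- The energy exchanged by the mode `a` with all other modes through the quadratic nonlinearity;
only its imaginary part enters the energy balance. -/
noncomputable def energyTransfer (w : ℝ → ℂ) (a : ℝ) : ℂ := a * ∫ b, triad w a b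

/-- The triad weighted by `a - b`, an antisymmetric function of the two modes. -/
def skewTriad (w : ℝ → ℂ) (a b : ℝ) : ℂ := (a - b) * triad w a b

variable {w : ℝ → ℂ} {B : ℝ≥0} {L : ℝ}

theorem triad_eq_mul_lagProduct (w : ℝ → ℂ) (a b : ℝ) :
    triad w a b = w a * lagProduct w (-a) b := by
  rw [triad, lagProduct, mul_assoc, sub_neg_eq_add, add_comm a b]

theorem triad_neg_sub (hreal : ∀ k, w (-k) = conj (w k)) (a b : ℝ) :
    triad w a (-a - b) = triad w a b := by
  have hab : w (-a - b) = conj (w (a + b)) := by rw [← hreal, neg_add']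
  have hb : w (a + (-a - b)) = conj (w b) := by rw [← hreal]; ring_nf
  rw [triad, triad, hab, hb, Complex.conj_conj, mul_right_comm]

-- The substitution `b ↦ -a - b` fixes the triad and replaces its weight `b` by `-a - b`, so the
-- weight `b` may be replaced by its mean `-a / 2`.
theorem three_mul_energyTransfer (hreal : ∀ k, w (-k) = conj (w k)) {a : ℝ}
    (htriad : Integrable (triad w a)) (hskew : Integrable (skewTriad w a)) :
    3 * energyTransfer w a = 2 * ∫ b, skewTriad w a b := by
  have hsubst : ∫ b, skewTriad w a b = ∫ b, (3 * a * triad w a b - skewTriad w a b) := by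
    rw [← integral_sub_left_eq_self _ volume (-a)]
    refine integral_congr_ae (.of_forall fun b => ?_)
    simp only [skewTriad, triad_neg_sub hreal]
    push_cast
    ring
  rw [integral_sub (htriad.const_mul _) hskew, integral_const_mul] at hsubst
  rw [energyTransfer]
  linear_combination -hsubst

theorem CorrelationMeasurable.integrable_norm (hw : CorrelationMeasurable w)
    (hB : ∀ x, ‖w x‖ ≤ B) (hsupp : ∀ x ∉ Set.Ioc (-L) L, w x = 0) :
    Integrable fun x => ‖w x‖ := by
  refine IntegrableOn.integrable_of_forall_notMem_eq_zero (s := Set.Ioc (-L) L) ?_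
    fun x hx => by rw [hsupp x hx, norm_zero]
  exact Measure.integrableOn_of_bounded measure_Ioc_lt_top.ne hw.aestronglyMeasurable_norm
    (.of_forall fun x => (norm_norm _).trans_le (hB x))

theorem CorrelationMeasurable.integrable_triad (hw : CorrelationMeasurable w)
    (hB : ∀ x, ‖w x‖ ≤ B) (hint : Integrable fun x => ‖w x‖) (a : ℝ) :
    Integrable (triad w a) :=
  ((hw.integrable_lagProduct hB hint (-a)).const_mul (w a)).congr
    (.of_forall fun b => (triad_eq_mul_lagProduct w a b).symm)

theorem skewTriad_eq_zero (hsupp : ∀ x ∉ Set.Ioc (-L) L, w x = 0) (a : ℝ) {b : ℝ}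
    (hb : b ∉ Set.Ioc (-L) L) : skewTriad w a b = 0 := by
  rw [skewTriad, triad, hsupp b hb, mul_zero, zero_mul, mul_zero]

theorem integrable_skewTriad (hsupp : ∀ x ∉ Set.Ioc (-L) L, w x = 0) {a : ℝ}
    (htriad : Integrable (triad w a)) : Integrable (skewTriad w a) := by
  refine IntegrableOn.integrable_of_forall_notMem_eq_zero (s := Set.Ioc (-L) L) ?_
    fun b hb => skewTriad_eq_zero hsupp a hb
  refine htriad.integrableOn.bdd_mul (c := |a| + L) (by fun_prop) ?_
  filter_upwards [ae_restrict_mem measurableSet_Ioc] with b hb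
  rw [← Complex.ofReal_sub, Complex.norm_real]
  exact (norm_sub_le a b).trans (add_le_add_right (abs_le.2 ⟨hb.1.le, hb.2⟩) _)

theorem skewTriad_add_swap (w : ℝ → ℂ) (x y s t : ℝ) :
    skewTriad w (x + s) (y + t) + skewTriad w (x + t) (y + s) =
      ((s - t : ℝ) : ℂ) * (exchangeDefect w s t x y * conj (w (x + s + (y + t)))) +
      ((x - y : ℝ) : ℂ) * ((w (x + s) * w (y + t) + w (x + t) * w (y + s)) *
        conj (w (x + s + (y + t)))) := by
  rw [skewTriad, skewTriad, triad, triad, exchangeDefect,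
    show x + t + (y + s) = x + s + (y + t) by ring]
  push_cast
  ring

theorem enorm_skewTriad_add_swap_le (hB : ∀ x, ‖w x‖ ≤ B) (x y s t : ℝ) :
    ‖skewTriad w (x + s) (y + t) + skewTriad w (x + t) (y + s)‖ₑ ≤
      ‖s - t‖ₑ * B * ‖exchangeDefect w s t x y‖ₑ + ‖x - y‖ₑ * (2 * B ^ 3) := by
  have hBe (x : ℝ) : ‖w x‖ₑ ≤ B := enorm_le_coe.2 (hB x)
  have hofReal (r : ℝ) : ‖(r : ℂ)‖ₑ = ‖r‖ₑ := by
    rw [← ofReal_norm, Complex.norm_real, ofReal_norm]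
  have hpair : ‖w (x + s) * w (y + t) + w (x + t) * w (y + s)‖ₑ ≤ B * B + B * B := by
    refine (enorm_add_le _ _).trans ?_
    rw [enorm_mul, enorm_mul]
    gcongr <;> exact hBe _
  rw [skewTriad_add_swap]
  refine (enorm_add_le _ _).trans ?_
  simp only [enorm_mul, RCLike.enorm_conj, hofReal]
  calc _ ≤ ‖s - t‖ₑ * (‖exchangeDefect w s t x y‖ₑ * B) + ‖x - y‖ₑ * ((B * B + B * B) * B) := by
        gcongr <;> exact hBe _
    _ = _ := by ring

theorem two_mul_enorm_sum_sum_le {ι E : Type*} [NormedAddCommGroup E] [NormedSpace ℝ E]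
    (s : Finset ι) (H : ι → ι → E) :
    2 * ‖∑ i ∈ s, ∑ j ∈ s, H i j‖ₑ ≤ ∑ i ∈ s, ∑ j ∈ s, ‖H i j + H j i‖ₑ := by
  have hsym : ∑ i ∈ s, ∑ j ∈ s, (H i j + H j i) = (2 : ℝ) • ∑ i ∈ s, ∑ j ∈ s, H i j := by
    simp only [Finset.sum_add_distrib]
    rw [Finset.sum_comm (f := fun i j => H j i), two_smul]
  calc 2 * ‖∑ i ∈ s, ∑ j ∈ s, H i j‖ₑ = ‖∑ i ∈ s, ∑ j ∈ s, (H i j + H j i)‖ₑ := by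
        rw [hsym, enorm_smul, Real.enorm_eq_ofReal zero_le_two, ENNReal.ofReal_ofNat]
    _ ≤ ∑ i ∈ s, ∑ j ∈ s, ‖H i j + H j i‖ₑ :=
        (enorm_sum_le _ _).trans (Finset.sum_le_sum fun i _ => enorm_sum_le _ _)

theorem two_mul_enorm_sum_skewTriad_le (hB : ∀ x, ‖w x‖ ≤ B) {a h : ℝ} (n : ℕ) {x y : ℝ}
    (hx : x ∈ Set.Ioc a (a + h)) (hy : y ∈ Set.Ioc a (a + h)) :
    2 * ‖∑ i ∈ Finset.range n, ∑ j ∈ Finset.range n, skewTriad w (x + i * h) (y + j * h)‖ₑ ≤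
      ENNReal.ofReal (n * h) * B * latticeDefect w h n x y +
        n ^ 2 * ENNReal.ofReal h * (2 * B ^ 3) := by
  have hxy : ‖x - y‖ₑ ≤ ENNReal.ofReal h := by
    rw [Real.enorm_eq_ofReal_abs]
    refine ENNReal.ofReal_le_ofReal (abs_le.2 ?_)
    constructor <;> linarith [hx.1, hx.2, hy.1, hy.2]
  have hh : 0 ≤ h := by linarith [hx.1, hx.2]
  have hij {i j : ℕ} (hi : i ∈ Finset.range n) (hj : j ∈ Finset.range n) :
      ‖i * h - j * h‖ₑ ≤ ENNReal.ofReal (n * h) := by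
    have hmem {i : ℕ} (hi : i ∈ Finset.range n) : i * h ∈ Set.Icc 0 (n * h) :=
      ⟨by positivity, by gcongr; exact (Finset.mem_range.1 hi).le⟩
    rw [Real.enorm_eq_ofReal_abs]
    exact ENNReal.ofReal_le_ofReal <|
      abs_sub_le_of_nonneg_of_le (hmem hi).1 (hmem hi).2 (hmem hj).1 (hmem hj).2
  calc _ ≤ ∑ i ∈ Finset.range n, ∑ j ∈ Finset.range n,
        (ENNReal.ofReal (n * h) * B * ‖exchangeDefect w (i * h) (j * h) x y‖ₑ +
          ENNReal.ofReal h * (2 * B ^ 3)) := by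
        refine (two_mul_enorm_sum_sum_le _ _).trans <|
          Finset.sum_le_sum fun i hi => Finset.sum_le_sum fun j hj =>
            (enorm_skewTriad_add_swap_le hB x y (i * h) (j * h)).trans ?_
        gcongr
        exact hij hi hj
    _ = _ := by
        simp only [Finset.sum_add_distrib, ← Finset.mul_sum, Finset.sum_const, Finset.card_range,
          nsmul_eq_mul, latticeDefect]
        ring

end Triad

section Cancellation

variable {w : ℝ → ℂ} {B : ℝ≥0} {L : ℝ}

theorem three_mul_sum_energyTransfer (hw : CorrelationMeasurable w)
    (hB : ∀ x, ‖w x‖ ≤ B) (hsupp : ∀ x ∉ Set.Ioc (-L) L, w x = 0)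
    (hreal : ∀ k, w (-k) = conj (w k)) {h : ℝ} (hh : 0 ≤ h) {n : ℕ} (hn : n * h = 2 * L) (x : ℝ) :
    3 * ∑ i ∈ Finset.range n, energyTransfer w (x + i * h) =
      2 * ∫ y in Set.Ioc (-L) (-L + h), ∑ i ∈ Finset.range n, ∑ j ∈ Finset.range n,
        skewTriad w (x + i * h) (y + j * h) := by
  have htriad := hw.integrable_triad hB (hw.integrable_norm hB hsupp)
  have hskew (a : ℝ) : Integrable (skewTriad w a) := integrable_skewTriad hsupp (htriad a)
  have hL : Set.Ioc (-L) L = Set.Ioc (-L) (-L + n * h) := by rw [hn]; ring_nf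
  have hcell (i : ℕ) : ∫ b, skewTriad w (x + i * h) b =
      ∫ b in Set.Ioc (-L) (-L + n * h), skewTriad w (x + i * h) b := by
    rw [← hL]
    exact (setIntegral_eq_integral_of_forall_compl_eq_zero fun b hb =>
      skewTriad_eq_zero hsupp _ hb).symm
  calc 3 * ∑ i ∈ Finset.range n, energyTransfer w (x + i * h)
      = 2 * ∑ i ∈ Finset.range n, ∫ b, skewTriad w (x + i * h) b := by
        simp only [Finset.mul_sum, three_mul_energyTransfer hreal (htriad _) (hskew _)]
    _ = 2 * ∫ b in Set.Ioc (-L) (-L + n * h),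
          ∑ i ∈ Finset.range n, skewTriad w (x + i * h) b := by
        rw [integral_finsetSum _ fun (i : ℕ) _ => (hskew (x + i * h)).integrableOn]
        simp only [hcell]
    _ = _ := by
        rw [setIntegral_Ioc_eq_setIntegral_sum
          (integrable_finsetSum _ fun (i : ℕ) _ => hskew (x + i * h)).integrableOn hh]
        exact congrArg _ (integral_congr_ae (.of_forall fun y => Finset.sum_comm))

theorem enorm_sum_energyTransfer_le (hw : CorrelationMeasurable w)
    (hB : ∀ x, ‖w x‖ ≤ B) (hsupp : ∀ x ∉ Set.Ioc (-L) L, w x = 0)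
    (hreal : ∀ k, w (-k) = conj (w k)) {h : ℝ} {n : ℕ} (hn : n * h = 2 * L) {x : ℝ}
    (hx : x ∈ Set.Ioc (-L) (-L + h)) :
    ‖∑ i ∈ Finset.range n, energyTransfer w (x + i * h)‖ₑ ≤
      ENNReal.ofReal (2 * L) * B * (∫⁻ y in Set.Ioc (-L) (-L + h), latticeDefect w h n x y) +
        ENNReal.ofReal (2 * L) ^ 2 * (2 * B ^ 3) := by
  have hh : 0 ≤ h := by linarith [hx.1, hx.2]
  have hL : (n : ℝ≥0∞) * ENNReal.ofReal h = ENNReal.ofReal (2 * L) := by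
    rw [← hn, ENNReal.ofReal_mul n.cast_nonneg, ENNReal.ofReal_natCast]
  set T := ∑ i ∈ Finset.range n, energyTransfer w (x + i * h)
  set G : ℝ → ℂ := fun y => ∑ i ∈ Finset.range n, ∑ j ∈ Finset.range n,
    skewTriad w (x + i * h) (y + j * h)
  have hofNat (k : ℕ) [k.AtLeastTwo] : ‖(ofNat(k) : ℂ)‖ₑ = ofNat(k) := by
    rw [← ofReal_norm, Complex.norm_ofNat, ENNReal.ofReal_ofNat]
  calc ‖T‖ₑ ≤ ‖3 * T‖ₑ := by
        rw [enorm_mul, hofNat]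
        exact le_mul_of_one_le_left' Nat.one_le_ofNat
    _ = 2 * ‖∫ y in Set.Ioc (-L) (-L + h), G y‖ₑ := by
        rw [three_mul_sum_energyTransfer hw hB hsupp hreal hh hn, enorm_mul, hofNat]
    _ ≤ 2 * ∫⁻ y in Set.Ioc (-L) (-L + h), ‖G y‖ₑ := by
        gcongr
        exact enorm_integral_le_lintegral_enorm _
    _ = ∫⁻ y in Set.Ioc (-L) (-L + h), 2 * ‖G y‖ₑ :=
        (lintegral_const_mul' _ _ ENNReal.ofNat_ne_top).symm
    _ ≤ ∫⁻ y in Set.Ioc (-L) (-L + h), (ENNReal.ofReal (n * h) * B * latticeDefect w h n x y +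
          n ^ 2 * ENNReal.ofReal h * (2 * B ^ 3)) :=
        setLIntegral_mono' measurableSet_Ioc fun y hy => two_mul_enorm_sum_skewTriad_le hB n hx hy
    _ = _ := by
        rw [lintegral_add_right _ measurable_const, lintegral_const_mul' _ _
          (ENNReal.mul_ne_top ENNReal.ofReal_ne_top ENNReal.coe_ne_top), setLIntegral_const,
          Real.volume_Ioc, add_sub_cancel_left, hn, ← hL]
        ring

theorem tendsto_lintegral_enorm_sum_energyTransfer (hw : CorrelationMeasurable w)
    (hB : ∀ x, ‖w x‖ ≤ B) (hsupp : ∀ x ∉ Set.Ioc (-L) L, w x = 0)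
    (hreal : ∀ k, w (-k) = conj (w k)) (hL : 0 ≤ L) :
    Tendsto (fun n : ℕ => ∫⁻ x in Set.Ioc (-L) (-L + 2 * L / n),
      ‖∑ i ∈ Finset.range n, energyTransfer w (x + i * (2 * L / n))‖ₑ) atTop (𝓝 0) := by
  have hC₁ : ENNReal.ofReal (2 * L) * B ≠ ∞ :=
    ENNReal.mul_ne_top ENNReal.ofReal_ne_top ENNReal.coe_ne_top
  have hC₂ : ENNReal.ofReal (2 * L) ^ 2 * (2 * B ^ 3) ≠ ∞ := by finiteness
  have hbound : Tendsto (fun n : ℕ => ENNReal.ofReal (2 * L) * B *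
      (∫⁻ x in Set.Ioc (-L) (-L + 2 * L / n), ∫⁻ y in Set.Ioc (-L) (-L + 2 * L / n),
        latticeDefect w (2 * L / n) n x y) +
      ENNReal.ofReal (2 * L) ^ 2 * (2 * B ^ 3) * ENNReal.ofReal (2 * L / n)) atTop (𝓝 0) := by
    have hdefect := tendsto_lintegral_latticeDefect hw hB (hw.integrable_norm hB hsupp) (-L)
      (mul_nonneg zero_le_two hL)
    have hstep := ENNReal.tendsto_ofReal (tendsto_const_div_atTop_nhds_zero_nat (2 * L))
    simpa using (ENNReal.Tendsto.const_mul hdefect (.inr hC₁)).add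
      (ENNReal.Tendsto.const_mul hstep (.inr hC₂))
  refine tendsto_of_tendsto_of_tendsto_of_le_of_le' tendsto_const_nhds hbound
    (.of_forall fun n => zero_le) ?_
  filter_upwards [eventually_gt_atTop 0] with n hn
  have hnL : n * (2 * L / n) = 2 * L := mul_div_cancel₀ _ (by positivity)
  calc _ ≤ ∫⁻ x in Set.Ioc (-L) (-L + 2 * L / n), (ENNReal.ofReal (2 * L) * B *
        (∫⁻ y in Set.Ioc (-L) (-L + 2 * L / n), latticeDefect w (2 * L / n) n x y) +
          ENNReal.ofReal (2 * L) ^ 2 * (2 * B ^ 3)) :=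
        setLIntegral_mono' measurableSet_Ioc fun x hx =>
          enorm_sum_energyTransfer_le hw hB hsupp hreal hnL hx
    _ = _ := by
        rw [lintegral_add_right _ measurable_const, lintegral_const_mul' _ _ hC₁,
          setLIntegral_const, Real.volume_Ioc, add_sub_cancel_left]

theorem enorm_setIntegral_le_of_tendsto_lattice {E : Type*} [NormedAddCommGroup E]
    [NormedSpace ℝ E] {a ℓ : ℝ} (hℓ : 0 ≤ ℓ) {m u : ℝ → E} {d : ℝ → ℝ≥0∞}
    (hm : IntegrableOn m (Set.Ioc a (a + ℓ))) (hd : AEMeasurable d)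
    (hmu : ∀ x, ‖m x - u x‖ₑ ≤ d x)
    (hu : Tendsto (fun n : ℕ => ∫⁻ x in Set.Ioc a (a + ℓ / n),
      ‖∑ i ∈ Finset.range n, u (x + i * (ℓ / n))‖ₑ) atTop (𝓝 0)) :
    ‖∫ x in Set.Ioc a (a + ℓ), m x‖ₑ ≤ ∫⁻ x in Set.Ioc a (a + ℓ), d x := by
  refine ge_of_tendsto (by simpa using hu.add_const (∫⁻ x in Set.Ioc a (a + ℓ), d x)) ?_
  filter_upwards [eventually_gt_atTop 0] with n hn
  have hnℓ : n * (ℓ / n) = ℓ := mul_div_cancel₀ _ (by positivity)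
  have hh : 0 ≤ ℓ / n := by positivity
  have hshift (i : ℕ) : AEMeasurable fun x => d (x + i * (ℓ / n)) :=
    hd.comp_quasiMeasurePreserving (measurePreserving_add_right volume _).quasiMeasurePreserving
  set I := Set.Ioc a (a + ℓ / n)
  calc ‖∫ x in Set.Ioc a (a + ℓ), m x‖ₑ
      = ‖∫ x in I, ∑ i ∈ Finset.range n, m (x + i * (ℓ / n))‖ₑ := by
        rw [← setIntegral_Ioc_eq_setIntegral_sum (by rwa [hnℓ]) hh, hnℓ]
    _ ≤ ∫⁻ x in I, ‖∑ i ∈ Finset.range n, m (x + i * (ℓ / n))‖ₑ :=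
        enorm_integral_le_lintegral_enorm _
    _ ≤ ∫⁻ x in I, (‖∑ i ∈ Finset.range n, u (x + i * (ℓ / n))‖ₑ +
          ∑ i ∈ Finset.range n, d (x + i * (ℓ / n))) := by
        refine lintegral_mono fun x => ?_
        rw [← sub_add_cancel (∑ i ∈ Finset.range n, m _) (∑ i ∈ Finset.range n, u _),
          ← Finset.sum_sub_distrib, add_comm (∑ i ∈ Finset.range n, (m _ - u _))]
        exact (enorm_add_le _ _).trans <| add_le_add_right
          ((enorm_sum_le _ _).trans (Finset.sum_le_sum fun i _ => hmu _)) _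
    _ = (∫⁻ x in I, ‖∑ i ∈ Finset.range n, u (x + i * (ℓ / n))‖ₑ) +
          ∫⁻ x in Set.Ioc a (a + ℓ), d x := by
        rw [lintegral_add_right' _ (Finset.aemeasurable_fun_sum _ fun i _ => (hshift i).restrict),
          ← setLIntegral_Ioc_eq_setLIntegral_sum hd hh, hnℓ]

end Cancellation

section Truncation

/-- The frequencies of size and amplitude at most `N`; the first inequality is strict so that the
set lies in the half-open interval `(-N, N]`. -/
def truncationSet (v : ℝ → ℂ) (N : ℕ) : Set ℝ := {x | |x| < N ∧ ‖v x‖ ≤ N}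

/-- The truncation of `v` to the frequencies of size and amplitude at most `N`. -/
noncomputable def truncation (v : ℝ → ℂ) (N : ℕ) : ℝ → ℂ := (truncationSet v N).indicator v

/-- The pairs `(a, b)` for which all the modes of `triad v a b` lie in `S`. -/
def triadSet (S : Set ℝ) : Set (ℝ × ℝ) := {p | p.1 ∈ S ∧ p.2 ∈ S ∧ p.1 + p.2 ∈ S}

/-- The error made by truncating `v` in the double integral that defines `∫ energyTransfer v`. -/
noncomputable def truncationError (v : ℝ → ℂ) (N : ℕ) (p : ℝ × ℝ) : ℝ≥0∞ :=
  ‖(p.1 : ℂ) * (triad v p.1 p.2 - triad (truncation v N) p.1 p.2)‖ₑ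

variable {v : ℝ → ℂ} {N : ℕ}

theorem norm_truncation_le (v : ℝ → ℂ) (N : ℕ) (x : ℝ) : ‖truncation v N x‖ ≤ (N : ℝ≥0) := by
  by_cases hx : x ∈ truncationSet v N
  · rw [truncation, Set.indicator_of_mem hx]
    exact_mod_cast hx.2
  · simp [truncation, Set.indicator_of_notMem hx]

theorem truncation_eq_zero (v : ℝ → ℂ) {x : ℝ} (hx : x ∉ Set.Ioc (-(N : ℝ)) N) :
    truncation v N x = 0 :=
  Set.indicator_of_notMem (fun h => hx ⟨(abs_lt.1 h.1).1, (abs_lt.1 h.1).2.le⟩) _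

theorem truncation_neg (hreal : ∀ k, v (-k) = conj (v k)) (k : ℝ) :
    truncation v N (-k) = conj (truncation v N k) := by
  have hmem : -k ∈ truncationSet v N ↔ k ∈ truncationSet v N := by
    simp only [truncationSet, Set.mem_ofPred_eq, abs_neg, hreal, RCLike.norm_conj]
  by_cases hk : k ∈ truncationSet v N
  · rw [truncation, Set.indicator_of_mem hk, Set.indicator_of_mem (hmem.2 hk), hreal]
  · rw [truncation, Set.indicator_of_notMem hk, Set.indicator_of_notMem (mt hmem.1 hk), map_zero]

theorem eventually_mem_truncationSet (v : ℝ → ℂ) (x : ℝ) :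
    ∀ᶠ N : ℕ in atTop, x ∈ truncationSet v N :=
  (tendsto_natCast_atTop_atTop.eventually_gt_atTop |x|).and
    (tendsto_natCast_atTop_atTop.eventually_ge_atTop ‖v x‖)

theorem CorrelationMeasurable.nullMeasurableSet_truncationSet (hv : CorrelationMeasurable v)
    (N : ℕ) : NullMeasurableSet (truncationSet v N) :=
  (measurableSet_lt measurable_abs measurable_const).nullMeasurableSet.inter <|
    nullMeasurableSet_le hv.aestronglyMeasurable_norm.aemeasurable aemeasurable_const

theorem CorrelationMeasurable.indicator (hv : CorrelationMeasurable v) {S : Set ℝ}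
    (hS : NullMeasurableSet S) : CorrelationMeasurable (S.indicator v) := fun k => by
  have hS' : NullMeasurableSet (S ∩ (· - k) ⁻¹' S) :=
    hS.inter (hS.preimage (measurePreserving_sub_right volume k).quasiMeasurePreserving)
  classical
  refine ((hv k).indicator₀ hS').congr (.of_forall fun x => ?_)
  simp only [lagProduct, Set.indicator_apply, Set.mem_inter_iff, Set.mem_preimage]
  split_ifs <;> simp_all

theorem nullMeasurableSet_triadSet {S : Set ℝ} (hS : NullMeasurableSet S) :
    NullMeasurableSet (triadSet S) :=
  (hS.preimage Measure.quasiMeasurePreserving_fst).inter <|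
    (hS.preimage Measure.quasiMeasurePreserving_snd).inter <|
      hS.preimage (quasiMeasurePreserving_add volume volume)

theorem enorm_mul_triad_sub_triad_indicator (v : ℝ → ℂ) (S : Set ℝ) (p : ℝ × ℝ) :
    ‖(p.1 : ℂ) * (triad v p.1 p.2 - triad (S.indicator v) p.1 p.2)‖ₑ =
      (triadSet S)ᶜ.indicator (fun p => ‖(p.1 : ℂ) * triad v p.1 p.2‖ₑ) p := by
  classical
  simp only [triad, triadSet, Set.indicator_apply, Set.mem_compl_iff, Set.mem_ofPred_eq]
  split_ifs <;> simp_all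

theorem aemeasurable_truncationError (hv : CorrelationMeasurable v)
    (hint : Integrable fun p : ℝ × ℝ => ‖(p.1 : ℂ) * triad v p.1 p.2‖) (N : ℕ) :
    AEMeasurable (truncationError v N) := by
  have hS := nullMeasurableSet_triadSet (hv.nullMeasurableSet_truncationSet N)
  have hmeas := hint.aestronglyMeasurable.enorm.indicator₀ hS.compl
  simp only [enorm_norm] at hmeas
  exact hmeas.congr (.of_forall fun p => (enorm_mul_triad_sub_triad_indicator v _ p).symm)

theorem tendsto_lintegral_truncationError (hv : CorrelationMeasurable v)
    (hint : Integrable fun p : ℝ × ℝ => ‖(p.1 : ℂ) * triad v p.1 p.2‖) :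
    Tendsto (fun N : ℕ => ∫⁻ p, truncationError v N p) atTop (𝓝 0) := by
  have hfin : ∫⁻ p : ℝ × ℝ, ‖(p.1 : ℂ) * triad v p.1 p.2‖ₑ ≠ ∞ := by
    simpa only [enorm_norm] using hint.hasFiniteIntegral.ne
  rw [← lintegral_zero (α := ℝ × ℝ) (μ := volume)]
  refine tendsto_lintegral_of_dominated_convergence' _
    (fun N => aemeasurable_truncationError hv hint N) (fun N => .of_forall fun p => ?_) hfin
    (.of_forall fun p => ?_)
  · exact (enorm_mul_triad_sub_triad_indicator v _ p).trans_le (Set.indicator_le_self _ _ p)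
  · refine tendsto_const_nhds.congr' ?_
    filter_upwards [eventually_mem_truncationSet v p.1, eventually_mem_truncationSet v p.2,
      eventually_mem_truncationSet v (p.1 + p.2)] with N h₁ h₂ h₁₂
    rw [truncationError, truncation, enorm_mul_triad_sub_triad_indicator,
      Set.indicator_of_notMem]
    exact Set.notMem_compl_iff.2 ⟨h₁, h₂, h₁₂⟩

theorem enorm_energyTransfer_sub_le {v w : ℝ → ℂ} {a : ℝ} (hv : Integrable (triad v a))
    (hw : Integrable (triad w a)) :
    ‖energyTransfer v a - energyTransfer w a‖ₑ ≤
      ∫⁻ b, ‖(a : ℂ) * (triad v a b - triad w a b)‖ₑ := by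
  rw [energyTransfer, energyTransfer, ← mul_sub, ← integral_sub hv hw, ← integral_const_mul]
  exact enorm_integral_le_lintegral_enorm _

theorem enorm_setIntegral_im_energyTransfer_le (hv : ∀ k, Integrable (lagProduct v k))
    (hreal : ∀ k, v (-k) = conj (v k))
    (hint : Integrable fun p : ℝ × ℝ => ‖(p.1 : ℂ) * triad v p.1 p.2‖)
    (him : Integrable fun a => (energyTransfer v a).im) (N : ℕ) :
    ‖∫ a in Set.Ioc (-(N : ℝ)) N, (energyTransfer v a).im‖ₑ ≤
      ∫⁻ p, truncationError v N p := by
  have hvm : CorrelationMeasurable v := fun k => (hv k).aestronglyMeasurable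
  have hwm : CorrelationMeasurable (truncation v N) :=
    hvm.indicator (hvm.nullMeasurableSet_truncationSet N)
  have hB := norm_truncation_le v N
  have hsupp (x) (hx : x ∉ Set.Ioc (-(N : ℝ)) N) := truncation_eq_zero v hx
  have hvt (a : ℝ) : Integrable (triad v a) := by
    simpa only [← triad_eq_mul_lagProduct] using (hv (-a)).const_mul (v a)
  have hwt := hwm.integrable_triad hB (hwm.integrable_norm hB hsupp)
  have hmeas := aemeasurable_truncationError hvm hint N
  have him_le (z : ℂ) : ‖z.im‖ₑ ≤ ‖z‖ₑ := enorm_le_iff_norm_le.2 (Complex.abs_im_le_norm z)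
  have hlattice := tendsto_of_tendsto_of_tendsto_of_le_of_le tendsto_const_nhds
    (tendsto_lintegral_enorm_sum_energyTransfer hwm hB hsupp (truncation_neg hreal) N.cast_nonneg)
    (fun n => zero_le) (fun n => lintegral_mono fun x => him_le _)
  have hle := enorm_setIntegral_le_of_tendsto_lattice (a := -(N : ℝ)) (ℓ := 2 * N) (by positivity)
    him.integrableOn hmeas.lintegral_prod_right'
    (fun a => (him_le _).trans (enorm_energyTransfer_sub_le (hvt a) (hwt a)))
    (by simpa only [Complex.im_sum] using hlattice)
  rw [show -(N : ℝ) + 2 * N = N by ring] at hle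
  exact (hle.trans (setLIntegral_le_lintegral _ _)).trans_eq (lintegral_prod _ hmeas).symm

theorem integral_im_energyTransfer_eq_zero (hv : ∀ k, Integrable (lagProduct v k))
    (hreal : ∀ k, v (-k) = conj (v k))
    (hint : Integrable fun p : ℝ × ℝ => ‖(p.1 : ℂ) * triad v p.1 p.2‖)
    (him : Integrable fun a => (energyTransfer v a).im) :
    ∫ a, (energyTransfer v a).im = 0 := by
  have hlim : Tendsto (fun N : ℕ => ‖∫ a in Set.Ioc (-(N : ℝ)) N, (energyTransfer v a).im‖ₑ)
      atTop (𝓝 ‖∫ a, (energyTransfer v a).im‖ₑ) :=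
    ((aecover_Ioc (tendsto_neg_atTop_atBot.comp tendsto_natCast_atTop_atTop)
      tendsto_natCast_atTop_atTop).integral_tendsto_of_countably_generated him).enorm
  have hzero := tendsto_of_tendsto_of_tendsto_of_le_of_le tendsto_const_nhds
    (tendsto_lintegral_truncationError (fun k => (hv k).aestronglyMeasurable) hint)
    (fun N => zero_le) (enorm_setIntegral_im_energyTransfer_le hv hreal hint him)
  exact enorm_eq_zero.1 (tendsto_nhds_unique hlim hzero)

end Truncation

section EnergyBalance

theorem integral_const_mul_im_energyTransfer_eq_zero {w : ℝ → ℂ}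
    (hconv : ∀ k, Integrable fun l => w (k - l) * w l) (hreal : ∀ k, w (-k) = conj (w k))
    (hdouble : Integrable fun p : ℝ × ℝ => |p.1| * ‖w (p.1 - p.2)‖ * ‖w p.2‖ * ‖w p.1‖)
    {c : ℝ} (him : Integrable fun k => c * (energyTransfer w k).im) :
    ∫ k, c * (energyTransfer w k).im = 0 := by
  have hlag (k : ℝ) : Integrable (lagProduct w k) :=
    (hconv k).congr <| .of_forall fun l => by
      rw [lagProduct, ← hreal, neg_sub, mul_comm]
  have hint : Integrable fun p : ℝ × ℝ => ‖(p.1 : ℂ) * triad w p.1 p.2‖ := by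
    have hneg : MeasurePreserving fun p : ℝ × ℝ => (p.1, -p.2) :=
      (MeasurePreserving.id volume).prod (Measure.measurePreserving_neg volume)
    refine ((hneg.integrable_comp hdouble.aestronglyMeasurable).2 hdouble).congr
      (.of_forall fun p => ?_)
    simp only [Function.comp_apply, sub_neg_eq_add, triad, norm_mul, Complex.norm_real,
      Real.norm_eq_abs, RCLike.norm_conj, hreal]
    ring
  rcases eq_or_ne c 0 with rfl | hc
  · simp only [zero_mul, integral_zero]
  · rw [integral_const_mul, integral_im_energyTransfer_eq_zero hlag hreal hint
      ((integrable_const_mul_iff hc.isUnit _).1 him), mul_zero]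

theorem conj_energyTransfer {w : ℝ → ℂ} (hreal : ∀ k, w (-k) = conj (w k)) (k : ℝ) :
    conj (energyTransfer w k) = conj (w k) * (k * ∫ l, w (k - l) * w l) := by
  have hconj : conj (∫ b, triad w k b) = conj (w k) * ∫ l, w (k - l) * w l := by
    rw [← integral_conj, ← integral_neg_eq_self, ← integral_const_mul]
    refine integral_congr_ae (.of_forall fun l => ?_)
    simp only [triad, hreal, map_mul, Complex.conj_conj, ← sub_eq_add_neg]
    ring
  rw [energyTransfer, map_mul, Complex.conj_ofReal, hconj, mul_left_comm]

theorem hasDerivAt_mul_norm_sq {f : ℝ → ℂ} {t : ℝ} (hf : DifferentiableAt ℝ f t) {m ω lam : ℝ}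
    {z : ℂ} (heq : m * deriv f t + Complex.I * ω * f t +
      Complex.I * lam / (4 * Real.pi) * z = 0) :
    HasDerivAt (fun s => m * ‖f s‖ ^ 2) (lam / (2 * Real.pi) * (conj (f t) * z).im) t := by
  refine (hf.hasDerivAt.norm_sq.const_mul m).congr_deriv ?_
  have hmul : (m : ℂ) * (deriv f t * conj (f t)) =
      -(Complex.I * ((ω * Complex.normSq (f t) : ℝ) : ℂ)) -
        Complex.I * (((lam / (4 * Real.pi) : ℝ) : ℂ) * (conj (f t) * z)) := by
    push_cast
    rw [← Complex.mul_conj]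
    linear_combination conj (f t) * heq
  have hre : m * (deriv f t * conj (f t)).re = lam / (4 * Real.pi) * (conj (f t) * z).im := by
    simpa only [Complex.re_ofReal_mul, Complex.sub_re, Complex.neg_re, Complex.I_mul_re,
      Complex.ofReal_im, Complex.im_ofReal_mul, neg_zero, sub_neg_eq_add, zero_add]
      using congrArg Complex.re hmul
  rw [Complex.inner]
  linear_combination 2 * hre

theorem norm_le_of_hasDerivAt_mul_norm_sq {E : Type*} [NormedAddCommGroup E]
    [InnerProductSpace ℝ E] {f : ℝ → E} {m d t : ℝ} (hf : DifferentiableAt ℝ f t)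
    (hd : HasDerivAt (fun s => m * ‖f s‖ ^ 2) d t) :
    ‖d‖ ≤ 2 * (|m| * ‖f t‖ * ‖deriv f t‖) := by
  rw [hd.unique (hf.hasDerivAt.norm_sq.const_mul m), norm_mul, norm_mul, Real.norm_ofNat,
    Real.norm_eq_abs m, mul_left_comm, mul_assoc |m|]
  gcongr
  exact norm_inner_le_norm _ _

theorem integrable_and_hasDerivAt_integral {X E : Type*} [MeasurableSpace X] {ρ : Measure X}
    [NormedAddCommGroup E] [NormedSpace ℝ E] {F F' : ℝ → X → E} (hF : ∀ t, Integrable (F t) ρ)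
    (hF' : ∀ t x, HasDerivAt (fun s => F s x) (F' t x) t)
    (hdom : ∀ T : ℝ, 0 < T → ∃ g : X → ℝ, Integrable g ρ ∧
      ∀ t : ℝ, |t| ≤ T → ∀ x, ‖F' t x‖ ≤ g x) (t : ℝ) :
    Integrable (F' t) ρ ∧ HasDerivAt (fun s => ∫ x, F s x ∂ρ) (∫ x, F' t x ∂ρ) t := by
  obtain ⟨g, hg, hF'g⟩ := hdom (|t| + 1) (by positivity)
  have hmeas : AEStronglyMeasurable (F' t) ρ :=
    aestronglyMeasurable_of_tendsto_ae (𝓝[≠] (0 : ℝ))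
      (f := fun s x => s⁻¹ • (F (t + s) x - F t x))
      (fun s => (((hF (t + s)).sub (hF t)).smul s⁻¹).aestronglyMeasurable)
      (.of_forall fun x => hasDerivAt_iff_tendsto_slope_zero.1 (hF' t x))
  have hball (s : ℝ) (hs : s ∈ Metric.ball t 1) : |s| ≤ |t| + 1 := by
    rw [Metric.mem_ball, Real.dist_eq] at hs
    linarith [abs_sub_abs_le_abs_sub s t]
  exact hasDerivAt_integral_of_dominated_loc_of_deriv_le (Metric.ball_mem_nhds t one_pos)
    (.of_forall fun s => (hF s).aestronglyMeasurable) (hF t) hmeas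
    (.of_forall fun x s hs => hF'g s (hball s hs) x) hg (.of_forall fun x s _ => hF' s x)

theorem fourier_fkdvbbm_energy_conservation_general (lam : ℝ) (m ω : ℝ → ℝ) (v : ℝ → ℝ → ℂ)
    (hdiff : ∀ k, Differentiable ℝ fun t => v t k)
    (hconv : ∀ t k, Integrable fun l => v t (k - l) * v t l)
    (heq : ∀ t k, (m k : ℂ) * deriv (fun s => v s k) t + Complex.I * ω k * v t k +
      Complex.I * lam / (4 * Real.pi) * (k * ∫ l, v t (k - l) * v t l) = 0)
    (hreal : ∀ t k, v t (-k) = conj (v t k))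
    (hE : ∀ t, Integrable fun k => m k * ‖v t k‖ ^ 2)
    (hdom : ∀ T : ℝ, 0 < T → ∃ g : ℝ → ℝ, Integrable g ∧
      ∀ t : ℝ, |t| ≤ T → ∀ k, |m k| * ‖v t k‖ * ‖deriv (fun s => v s k) t‖ ≤ g k)
    (hdouble : ∀ t, Integrable fun p : ℝ × ℝ =>
      |p.1| * ‖v t (p.1 - p.2)‖ * ‖v t p.2‖ * ‖v t p.1‖) (t : ℝ) :
    ∫ k, m k * ‖v t k‖ ^ 2 = ∫ k, m k * ‖v 0 k‖ ^ 2 := by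
  have hbalance (t k : ℝ) : HasDerivAt (fun s => m k * ‖v s k‖ ^ 2)
      (-(lam / (2 * Real.pi)) * (energyTransfer (v t) k).im) t := by
    have h := hasDerivAt_mul_norm_sq (hdiff k t) (heq t k)
    rwa [← conj_energyTransfer (hreal t), Complex.conj_im, mul_neg, ← neg_mul] at h
  have hderiv (t : ℝ) : HasDerivAt (fun s => ∫ k, m k * ‖v s k‖ ^ 2) 0 t := by
    obtain ⟨hint, h⟩ := integrable_and_hasDerivAt_integral hE hbalance (fun T hT => by
      obtain ⟨g, hg, hle⟩ := hdom T hT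
      exact ⟨fun k => 2 * g k, hg.const_mul 2, fun t ht k =>
        (norm_le_of_hasDerivAt_mul_norm_sq (hdiff k t) (hbalance t k)).trans
          (mul_le_mul_of_nonneg_left (hle t ht k) zero_le_two)⟩) t
    rwa [integral_const_mul_im_energyTransfer_eq_zero (hconv t) (hreal t) (hdouble t) hint] at h
  exact is_const_of_deriv_eq_zero (fun s => (hderiv s).differentiableAt)
    (fun s => (hderiv s).deriv) t 0

end EnergyBalance

/-- conservation of the energy `E(t) = ∫ (1+ν|k|^α)|v(t,k)|² dk` for solutions
of the Fourier-side fractional KdV-BBM equation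
`(1+ν|k|^α)∂ₜv + iκk v − iμ|k|^α k v + (iλk/(4π)) v∗v = 0` satisfying the reality condition
`v(t,−k) = conj v(t,k)` and suitable integrability assumptions (by Plancherel this is the
conservation of `I₂ = ∫ (u² + ν|D^{α/2}u|²) dx`). -/
theorem fourier_fkdvbbm_energy_conservation (κ μ lam ν α : ℝ) (hlam : 0 < lam)
    (hν : 0 < ν) (hα : α ∈ Set.Ioo (0 : ℝ) 1) (v : ℝ → ℝ → ℂ)
    (hdiff : ∀ k : ℝ, Differentiable ℝ fun t => v t k)
    (hconv : ∀ t k : ℝ, Integrable fun l : ℝ => v t (k - l) * v t l)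
    (heq : ∀ t k : ℝ,
      ((1 + ν * |k| ^ α : ℝ) : ℂ) * deriv (fun s => v s k) t
        + Complex.I * (κ : ℂ) * (k : ℂ) * v t k
        - Complex.I * (μ : ℂ) * ((|k| ^ α : ℝ) : ℂ) * (k : ℂ) * v t k
        + Complex.I * (lam : ℂ) * (k : ℂ) / (4 * (Real.pi : ℂ)) *
            ∫ l : ℝ, v t (k - l) * v t l = 0)
    (hreal : ∀ t k : ℝ, v t (-k) = starRingEnd ℂ (v t k))
    (hE : ∀ t : ℝ, Integrable fun k : ℝ => (1 + ν * |k| ^ α) * ‖v t k‖ ^ 2)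
    (hE' : ∀ t : ℝ, Integrable fun k : ℝ =>
      (1 + ν * |k| ^ α) * ‖v t k‖ * ‖deriv (fun s => v s k) t‖)
    (hdom : ∀ T : ℝ, 0 < T → ∃ g : ℝ → ℝ, Integrable g ∧
      ∀ t : ℝ, |t| ≤ T → ∀ k : ℝ,
        (1 + ν * |k| ^ α) * ‖v t k‖ * ‖deriv (fun s => v s k) t‖ ≤ g k)
    (hdouble : ∀ t : ℝ, Integrable fun p : ℝ × ℝ =>
      |p.1| * ‖v t (p.1 - p.2)‖ * ‖v t p.2‖ * ‖v t p.1‖) :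
    ∀ t : ℝ, (∫ k : ℝ, (1 + ν * |k| ^ α) * ‖v t k‖ ^ 2)
      = ∫ k : ℝ, (1 + ν * |k| ^ α) * ‖v 0 k‖ ^ 2 := by
  have hm (k : ℝ) : 0 ≤ 1 + ν * |k| ^ α := by positivity
  refine fourier_fkdvbbm_energy_conservation_general lam (fun k => 1 + ν * |k| ^ α)
    (fun k => κ * k - μ * |k| ^ α * k) v hdiff hconv (fun t k => ?_) hreal hE ?_ hdouble
  · rw [← heq t k]
    push_cast
    ring
  · simpa only [abs_of_nonneg (hm _)] using hdom
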